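/- Let k be a field of characteristic zero and S = k[x_0, …, x_n]. If I and J are strongly stable monomial ideals of S and J = g·I for some g ∈ GL_{n+1}(k) (acting by the k-algebra automorphism x_j ↦ ∑_i g_{ij} x_i and taking the image ideal), then I = J. In other words, every GL_{n+1}(k)-orbit of ideals contains at most one strongly stable ideal. -/

import Mathlib

open MvPolynomial

noncomputable section

/-- The coordinate change attached to a matrix. -/
def coordChange {k : Type} [Field k] {N : ℕ} (g : Matrix (Fin N) (Fin N) k) :
    MvPolynomial (Fin N) k →ₐ[k] MvPolynomial (Fin N) k :=
  MvPolynomial.aeval (fun j : Fin N => ∑ i : Fin N, (g i j) • (X i : MvPolynomial (Fin N) k))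

/-- Strong stability of a set of exponents. -/
def SStable {N : ℕ} (A : Set (Fin N →₀ ℕ)) : Prop :=
  ∀ (u : Fin N →₀ ℕ) (i j : Fin N), i < j →
    u + Finsupp.single j 1 ∈ A → u + Finsupp.single i 1 ∈ A

theorem SStable.move {N : ℕ} {A : Set (Fin N →₀ ℕ)} (hA : SStable A) {i j : Fin N} (hij : i < j)
    (t : ℕ) : ∀ u : Fin N →₀ ℕ, u + Finsupp.single j t ∈ A → u + Finsupp.single i t ∈ A := by
  induction t with
  | zero => intro u h; simpa using h
  | succ t ih =>
    intro u h
    have h1 : (u + Finsupp.single j t) + Finsupp.single j 1 ∈ A := by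
      rw [add_assoc, ← Finsupp.single_add]; exact h
    have h2 := hA _ i j hij h1
    have h3 : (u + Finsupp.single i 1) + Finsupp.single j t ∈ A := by
      rw [add_right_comm]; exact h2
    have h4 := ih _ h3
    rw [add_assoc, ← Finsupp.single_add, add_comm 1 t] at h4
    exact h4

theorem SStable.exch {N : ℕ} {A : Set (Fin N →₀ ℕ)} (hA : SStable A) {i j : Fin N} (hij : i < j)
    (s : Fin N →₀ ℕ) (hs : s ∈ A) (hle : s i ≤ s j) :
    Finsupp.equivMapDomain (Equiv.swap i j) s ∈ A := by
  have hne : i ≠ j := hij.ne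
  have e1 : s = (s - Finsupp.single j (s j - s i)) + Finsupp.single j (s j - s i) := by
    ext l
    simp only [Finsupp.add_apply, Finsupp.tsub_apply, Finsupp.single_apply]
    by_cases h : j = l
    · subst h; simp
    · simp [h]
  have e2 : Finsupp.equivMapDomain (Equiv.swap i j) s
      = (s - Finsupp.single j (s j - s i)) + Finsupp.single i (s j - s i) := by
    ext l
    simp only [Finsupp.add_apply, Finsupp.tsub_apply, Finsupp.single_apply,
      Finsupp.equivMapDomain_apply, Equiv.symm_swap]
    by_cases h : j = l
    · subst h; simp [hne]; omega
    · by_cases h' : i = l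
      · subst h'; simp [h]; omega
      · rw [Equiv.swap_apply_of_ne_of_ne (Ne.symm h') (Ne.symm h)]; simp [h, h']
  rw [e2]
  apply hA.move hij
  rw [← e1]; exact hs

theorem perm_eq_one_of_no_inv {N : ℕ} (σ : Equiv.Perm (Fin N))
    (h : ∀ i j, i < j → ¬ σ j < σ i) : σ = 1 := by
  have hm : StrictMono σ := by
    intro i j hij
    exact lt_of_le_of_ne (not_lt.mp (h i j hij)) (fun e => hij.ne (σ.injective e))
  have hm' : StrictMono σ.symm := by
    intro a b hab
    by_contra hc
    have := hm.monotone (not_lt.mp hc)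
    simp at this
    exact absurd hab (not_lt.mpr this)
  ext i
  have h1 : i ≤ σ i := hm.le_apply
  have h2 : σ i ≤ σ.symm (σ i) := hm'.le_apply
  simp at h2
  simp [le_antisymm h2 h1]

theorem perm_contain {N : ℕ} {A B : Set (Fin N →₀ ℕ)} (hA : SStable A) (hB : SStable B)
    (σ₀ : Equiv.Perm (Fin N)) (h₀ : ∀ s ∈ A, Finsupp.equivMapDomain σ₀ s ∈ B) : A ⊆ B := by
  classical
  obtain ⟨σ, hσ, hmax⟩ := Set.exists_max_image
    {σ : Equiv.Perm (Fin N) | ∀ s ∈ A, Finsupp.equivMapDomain σ s ∈ B}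
    (fun σ => ∑ l : Fin N, (l : ℤ) * (σ l : ℤ)) (Set.toFinite _) ⟨σ₀, h₀⟩
  have h1 : σ = 1 := by
    apply perm_eq_one_of_no_inv
    intro i j hij hinv
    have hmem : ∀ s ∈ A, Finsupp.equivMapDomain (σ * Equiv.swap i j) s ∈ B := by
      intro s hs
      rcases le_total (s i) (s j) with hle | hle
      · have := hσ _ (hA.exch hij s hs hle)
        rw [← Finsupp.equivMapDomain_trans] at this
        exact this
      · have := hB.exch hinv _ (hσ s hs) (by simpa using hle)
        convert this using 1
        rw [← Finsupp.equivMapDomain_trans]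
        congr 1
        change σ * Equiv.swap i j = Equiv.swap (σ j) (σ i) * σ
        rw [Equiv.mul_swap_eq_swap_mul, Equiv.swap_comm]
    have hle := hmax _ hmem
    have hne : i ≠ j := hij.ne
    have hdiff : ∑ l : Fin N, ((l : ℤ) * ((σ * Equiv.swap i j) l : ℤ) - (l : ℤ) * (σ l : ℤ))
        = ((j : ℤ) - i) * ((σ i : ℤ) - σ j) := by
      rw [Fintype.sum_eq_add i j hne]
      · simp; ring
      · intro l hl
        simp [Equiv.swap_apply_of_ne_of_ne hl.1 hl.2]
    rw [Finset.sum_sub_distrib] at hdiff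
    have p1 : (0 : ℤ) < (j : ℤ) - i := by have : (i : ℕ) < j := hij; omega
    have p2 : (0 : ℤ) < (σ i : ℤ) - σ j := by have : (σ j : ℕ) < σ i := hinv; omega
    have := mul_pos p1 p2
    linarith
  intro s hs
  have := hσ s hs
  rw [h1] at this
  have e : Finsupp.equivMapDomain (1 : Equiv.Perm (Fin N)) s = s := Finsupp.equivMapDomain_refl s
  rwa [e] at this

/-- Exponents of the monomials in an ideal. -/
def expSet {k : Type} [Field k] {N : ℕ} (I : Ideal (MvPolynomial (Fin N) k)) :
    Set (Fin N →₀ ℕ) := {s | (monomial s (1 : k) : MvPolynomial (Fin N) k) ∈ I}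

/-- Strongly stable monomial ideals. -/
def Good {k : Type} [Field k] {N : ℕ} (I : Ideal (MvPolynomial (Fin N) k)) : Prop :=
  (∃ G : Set (Fin N →₀ ℕ),
    I = Ideal.span ((fun s => (monomial s (1 : k) : MvPolynomial (Fin N) k)) '' G)) ∧
  SStable (expSet I)

theorem Good.le_of {k : Type} [Field k] {N : ℕ} {I J : Ideal (MvPolynomial (Fin N) k)}
    (hI : Good I) (h : ∀ s ∈ expSet I, (monomial s (1 : k) : MvPolynomial (Fin N) k) ∈ J) :
    I ≤ J := by
  obtain ⟨⟨G, hG⟩, -⟩ := hI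
  rw [hG, Ideal.span_le]
  rintro _ ⟨s, hs, rfl⟩
  apply h
  change _ ∈ I
  rw [hG]
  exact Ideal.subset_span ⟨s, hs, rfl⟩

theorem Good.map_le_of {k : Type} [Field k] {N : ℕ} {I J : Ideal (MvPolynomial (Fin N) k)}
    (hI : Good I) (φ : MvPolynomial (Fin N) k →ₐ[k] MvPolynomial (Fin N) k)
    (h : ∀ s ∈ expSet I, φ (monomial s (1 : k) : MvPolynomial (Fin N) k) ∈ J) :
    Ideal.map φ I ≤ J := by
  rw [Ideal.map_le_iff_le_comap]
  exact hI.le_of h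

theorem coordChange_X {k : Type} [Field k] {N : ℕ} (g : Matrix (Fin N) (Fin N) k) (j : Fin N) :
    coordChange g (X j) = ∑ i : Fin N, (g i j) • (X i : MvPolynomial (Fin N) k) := by
  simp [coordChange]

theorem coordChange_mul {k : Type} [Field k] {N : ℕ} (g h : Matrix (Fin N) (Fin N) k) :
    coordChange (g * h) = (coordChange g).comp (coordChange h) := by
  apply MvPolynomial.algHom_ext
  intro j
  simp only [AlgHom.comp_apply, coordChange_X, map_sum, map_smul, Matrix.mul_apply,
    Finset.sum_smul, Finset.smul_sum, smul_smul]
  rw [Finset.sum_comm]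
  simp only [mul_comm]

theorem coordChange_one {k : Type} [Field k] {N : ℕ} :
    coordChange (1 : Matrix (Fin N) (Fin N) k) = AlgHom.id k _ := by
  apply MvPolynomial.algHom_ext
  intro j
  simp [coordChange_X, Matrix.one_apply]

theorem upper_aux {k : Type} [Field k] {N : ℕ} {I : Ideal (MvPolynomial (Fin N) k)}
    (hI : Good I) (b : Matrix (Fin N) (Fin N) k) (hb : ∀ i j, j < i → b i j = 0)
    (m : ℕ) : ∀ s t : Fin N →₀ ℕ, s.degree = m → t + s ∈ expSet I →
      (monomial t (1 : k)) * coordChange b (monomial s (1 : k)) ∈ I := by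
  induction m with
  | zero =>
    intro s t hs h
    rw [Finsupp.degree_eq_zero_iff] at hs
    subst hs
    have : (monomial t (1 : k)) ∈ I := by simpa [expSet] using h
    exact Ideal.mul_mem_right _ _ this
  | succ m ih =>
    intro s t hs h
    obtain ⟨j, hj⟩ : ∃ j, s j ≠ 0 := by
      by_contra! hc
      have : s = 0 := Finsupp.ext hc
      simp [this] at hs
    obtain ⟨s', rfl⟩ : ∃ s', s = s' + Finsupp.single j 1 :=
      ⟨s - Finsupp.single j 1, (tsub_add_cancel_of_le
        (by simpa [Finsupp.single_le_iff] using Nat.one_le_iff_ne_zero.mpr hj)).symm⟩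
    have hs' : s'.degree = m := by
      simpa [map_add] using hs
    have e : (monomial (s' + Finsupp.single j 1) (1 : k)) = monomial s' (1 : k) * X j := by
      rw [X, monomial_mul, one_mul]
    rw [e, map_mul, coordChange_X, Finset.mul_sum, Finset.mul_sum]
    apply Ideal.sum_mem
    intro i _
    by_cases hij : j < i
    · simp [hb i j hij]
    · have hm : (t + Finsupp.single i 1) + s' ∈ expSet I := by
        have h' : (t + s') + Finsupp.single j 1 ∈ expSet I := by rwa [add_assoc]
        rw [add_right_comm]
        rcases (not_lt.mp hij).lt_or_eq with hlt | heq
        · exact hI.2 _ i j hlt h'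
        · rw [heq]; exact h'
      have h2 := ih s' (t + Finsupp.single i 1) hs' hm
      have e2 : (monomial (t + Finsupp.single i 1) (1 : k)) = monomial t (1 : k) * X i := by
        rw [X, monomial_mul, one_mul]
      rw [e2] at h2
      have h3 := I.mul_mem_left (C (b i j)) h2
      convert h3 using 1
      rw [smul_eq_C_mul]
      ring

theorem upper_le {k : Type} [Field k] {N : ℕ} {I : Ideal (MvPolynomial (Fin N) k)}
    (hI : Good I) (b : Matrix (Fin N) (Fin N) k) (hb : ∀ i j, j < i → b i j = 0) :
    Ideal.map (coordChange b) I ≤ I := by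
  apply hI.map_le_of
  intro s hs
  have := upper_aux hI b hb _ s 0 rfl (by simpa using hs)
  have e : (monomial (0 : Fin N →₀ ℕ) (1 : k)) = 1 := rfl
  rwa [e, one_mul] at this

/-- The property to be proved for all invertible matrices. -/
def PP {k : Type} [Field k] {N : ℕ} (g : Matrix (Fin N) (Fin N) k) : Prop :=
  ∀ I J : Ideal (MvPolynomial (Fin N) k), Good I → Good J →
    Ideal.map (coordChange g) I ≤ J → I ≤ J

theorem map_coordChange_mul {k : Type} [Field k] {N : ℕ} (g h : Matrix (Fin N) (Fin N) k)
    (I : Ideal (MvPolynomial (Fin N) k)) :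
    Ideal.map (coordChange (g * h)) I = Ideal.map (coordChange g) (Ideal.map (coordChange h) I) := by
  rw [coordChange_mul]
  exact (Ideal.map_mapₐ (coordChange h) (coordChange g)).symm

theorem PP.of_upper {k : Type} [Field k] {N : ℕ} {g b b' : Matrix (Fin N) (Fin N) k}
    (hb : ∀ i j, j < i → b i j = 0) (hb' : ∀ i j, j < i → b' i j = 0)
    (h : PP (b * g * b')) : PP g := by
  intro I J hI hJ hle
  apply h I J hI hJ
  rw [map_coordChange_mul, map_coordChange_mul]
  exact (Ideal.map_mono ((Ideal.map_mono (upper_le hI b' hb')).trans hle)).trans (upper_le hJ b hb)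

theorem monomial_matrix {k : Type} [Field k] {N : ℕ} (g : Matrix (Fin N) (Fin N) k)
    (σ : Equiv.Perm (Fin N)) (hσ : ∀ i j, g i j ≠ 0 ↔ i = σ j) : PP g := by
  intro I J hI hJ hle
  have key : ∀ s : Fin N →₀ ℕ, coordChange g (monomial s (1 : k))
      = monomial (Finsupp.equivMapDomain σ s) (∏ j, g (σ j) j ^ s j) := by
    intro s
    have hX : ∀ j, coordChange g (X j) = C (g (σ j) j) * X (σ j) := by
      intro j
      rw [coordChange_X, Finset.sum_eq_single (σ j), smul_eq_C_mul]
      · intro i _ hi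
        have : g i j = 0 := by
          by_contra hc
          exact hi ((hσ i j).mp hc)
        simp [this]
      · simp
    have e1 : (monomial s (1 : k)) = ∏ j, (X j : MvPolynomial (Fin N) k) ^ s j := by
      rw [monomial_eq, C_1, one_mul, Finsupp.prod_fintype]
      simp
    rw [e1, map_prod, monomial_eq, Finsupp.prod_fintype _ _ (by simp), map_prod]
    rw [← Equiv.prod_comp σ (fun i => (X i : MvPolynomial (Fin N) k) ^ _), ← Finset.prod_mul_distrib]
    apply Finset.prod_congr rfl
    intro j _
    rw [map_pow, hX, mul_pow, map_pow, Finsupp.equivMapDomain_apply, Equiv.symm_apply_apply]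
  apply hI.le_of
  apply perm_contain hI.2 hJ.2 σ
  intro s hs
  have h1 : coordChange g (monomial s (1 : k)) ∈ J := hle (Ideal.mem_map_of_mem _ hs)
  rw [key] at h1
  set c := ∏ j, g (σ j) j ^ s j with hc
  have hc0 : c ≠ 0 := by
    rw [hc, Finset.prod_ne_zero_iff]
    intro j _
    exact pow_ne_zero _ ((hσ _ _).mpr rfl)
  have h2 := J.mul_mem_left (C c⁻¹) h1
  rw [C_mul_monomial, inv_mul_cancel₀ hc0] at h2
  exact h2

theorem elim_step {k : Type} [Field k] {N : ℕ} (d : ℕ) : ∀ (m : ℕ), m + d = N →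
    ∀ (g : Matrix (Fin N) (Fin N) k) (σ : Fin N → Fin N), g.det ≠ 0 →
    (∀ j : Fin N, (j : ℕ) < m → ∀ i, g i j ≠ 0 ↔ i = σ j) →
    (∀ j : Fin N, (j : ℕ) < m → ∀ j', g (σ j) j' ≠ 0 ↔ j' = j) → PP g := by
  induction d with
  | zero =>
    intro m hm g σ _ h1 h2
    have hl : ∀ j : Fin N, (j : ℕ) < m := fun j => by have := j.2; omega
    have hinj : Function.Injective σ := by
      intro a b hab
      have h3 := (h2 b (hl b) b).mpr rfl
      rw [← hab] at h3
      exact ((h2 a (hl a) b).mp h3).symm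
    apply monomial_matrix g (Equiv.ofBijective σ (Finite.injective_iff_bijective.mp hinj))
    intro i j
    exact h1 j (hl j) i
  | succ d ih =>
    intro m hm g σ hdet h1 h2
    classical
    obtain ⟨c, hcm⟩ : ∃ c : Fin N, (c : ℕ) = m := ⟨⟨m, by omega⟩, rfl⟩
    have hne : (Finset.univ.filter (fun i => g i c ≠ 0)).Nonempty := by
      by_contra hc
      rw [Finset.not_nonempty_iff_eq_empty, Finset.filter_eq_empty_iff] at hc
      apply hdet
      apply Matrix.det_eq_zero_of_column_eq_zero c
      intro i
      simpa using hc (Finset.mem_univ i)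
    obtain ⟨r, hr, hrmax⟩ := Finset.exists_max_image _ (fun i => i) hne
    have hr0 : g r c ≠ 0 := by simpa using hr
    have hrbig : ∀ i, r < i → g i c = 0 := by
      intro i hi
      by_contra hc
      exact absurd (hrmax i (by simpa using hc)) (not_le.mpr hi)
    have hrσ : ∀ j : Fin N, (j : ℕ) < m → r ≠ σ j := by
      intro j hj e
      rw [e] at hr0
      have := (h2 j hj c).mp hr0
      rw [this] at hcm
      omega
    have hrow : ∀ j : Fin N, (j : ℕ) < m → g r j = 0 := by
      intro j hj
      by_contra hc
      exact hrσ j hj ((h1 j hj r).mp hc)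
    have hcol : ∀ j : Fin N, (j : ℕ) < m → g (σ j) c = 0 := by
      intro j hj
      by_contra hc
      have := (h2 j hj c).mp hc
      rw [this] at hcm
      omega
    let b : Matrix (Fin N) (Fin N) k := fun i l =>
      (if i = l then 1 else 0) - (if l = r then (if i = r then 0 else g i c / g r c) else 0)
    let b' : Matrix (Fin N) (Fin N) k := fun l j =>
      (if l = j then 1 else 0) - (if l = c then (if j = c then 0 else g r j / g r c) else 0)
    have hb : ∀ i j, j < i → b i j = 0 := by
      intro i j hij
      simp only [b]
      rw [if_neg hij.ne']
      by_cases hj : j = r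
      · subst hj
        simp [hij.ne', hrbig i hij]
      · simp [hj]
    have hb' : ∀ i j, j < i → b' i j = 0 := by
      intro i j hij
      simp only [b']
      rw [if_neg hij.ne']
      by_cases hi : i = c
      · subst hi
        have : (j : ℕ) < m := by have : (j : ℕ) < i := hij; omega
        simp [hij.ne, hrow j this]
      · simp [hi]
    have hbdet : b.det ≠ 0 := by
      rw [Matrix.det_of_isUpperTriangular (fun i j hij => hb i j hij), Finset.prod_ne_zero_iff]
      intro i _
      by_cases h : i = r <;> simp [b, h]
    have hbdet' : b'.det ≠ 0 := by
      rw [Matrix.det_of_isUpperTriangular (fun i j hij => hb' i j hij), Finset.prod_ne_zero_iff]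
      intro i _
      by_cases h : i = c <;> simp [b', h]
    have e1 : ∀ i j, (b * g) i j = g i j - (if i = r then 0 else g i c / g r c) * g r j := by
      intro i j
      rw [Matrix.mul_apply]
      simp [b, sub_mul, Finset.sum_sub_distrib]
    have e2 : ∀ i j, (b * g * b') i j =
        (b * g) i j - (b * g) i c * (if j = c then 0 else g r j / g r c) := by
      intro i j
      rw [Matrix.mul_apply]
      simp [b', mul_sub, Finset.sum_sub_distrib]
    have e3 : ∀ i j, (b * g * b') i j = if i = r then (if j = c then g r c else 0) else
        (if j = c then 0 else g i j - g i c / g r c * g r j) := by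
      intro i j
      rw [e2, e1, e1]
      have hz : g i c - g i c / g r c * g r c = 0 := by rw [div_mul_cancel₀ _ hr0, sub_self]
      by_cases hi : i = r
      · by_cases hj : j = c
        · simp [hi, hj]
        · simp [hi, hj, mul_div_cancel₀, hr0]
      · by_cases hj : j = c
        · simp only [hi, hj, if_true, if_false, mul_zero, sub_zero, hz]
        · simp only [hi, hj, if_false, hz, zero_mul, sub_zero]
    apply PP.of_upper hb hb'
    apply ih (m + 1) (by omega) _ (Function.update σ c r)
    · rw [Matrix.det_mul, Matrix.det_mul]
      exact mul_ne_zero (mul_ne_zero hbdet hdet) hbdet'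
    · intro j hj i
      rw [e3]
      by_cases hjc : j = c
      · subst hjc
        by_cases hi : i = r <;> simp [hi, hr0]
      · have hj' : (j : ℕ) < m := by
          have : (j : ℕ) ≠ c := fun h => hjc (Fin.ext h)
          omega
        rw [Function.update_of_ne hjc]
        by_cases hi : i = r
        · simp [hi, hjc, hrσ j hj']
        · simpa [hi, hjc, hrow j hj'] using h1 j hj' i
    · intro j hj j'
      rw [e3]
      by_cases hjc : j = c
      · subst hjc
        by_cases hi : j' = j <;> simp [hi, hr0]
      · have hj' : (j : ℕ) < m := by
          have : (j : ℕ) ≠ c := fun h => hjc (Fin.ext h)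
          omega
        rw [Function.update_of_ne hjc, if_neg (hrσ j hj').symm]
        by_cases hi : j' = c
        · simp [hi, Ne.symm hjc]
        · simpa [hi, hcol j hj'] using h2 j hj' j'

theorem PP_all {k : Type} [Field k] {N : ℕ} (g : Matrix (Fin N) (Fin N) k) (hg : g.det ≠ 0) :
    PP g :=
  elim_step N 0 (by omega) g id hg (fun j hj => absurd hj (by omega))
    (fun j hj => absurd hj (by omega))

/-- over a field `k` of characteristic zero, if `I` and `J` are
strongly stable monomial ideals of `S = k[x_0, …, x_n]` and `J = g·I` for some
`g ∈ GL_{n+1}(k)` (acting by the algebra automorphism `x_j ↦ ∑_i g_{ij} x_i`),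
then `I = J`: each `GL_{n+1}(k)`-orbit contains at most one strongly stable ideal. -/
theorem stmt18 {k : Type} [Field k] [CharZero k] (n : ℕ)
    (I J : Ideal (MvPolynomial (Fin (n + 1)) k))
    -- `I` and `J` are monomial ideals:
    (hImon : ∃ G : Set (Fin (n + 1) →₀ ℕ),
      I = Ideal.span ((fun s => (monomial s (1 : k) : MvPolynomial (Fin (n + 1)) k)) '' G))
    (hJmon : ∃ G : Set (Fin (n + 1) →₀ ℕ),
      J = Ideal.span ((fun s => (monomial s (1 : k) : MvPolynomial (Fin (n + 1)) k)) '' G))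
    -- `I` and `J` are strongly stable:
    (hIst : ∀ (u : Fin (n + 1) →₀ ℕ) (i j : Fin (n + 1)), i < j →
      (monomial (u + Finsupp.single j 1) (1 : k) : MvPolynomial (Fin (n + 1)) k) ∈ I →
      (monomial (u + Finsupp.single i 1) (1 : k) : MvPolynomial (Fin (n + 1)) k) ∈ I)
    (hJst : ∀ (u : Fin (n + 1) →₀ ℕ) (i j : Fin (n + 1)), i < j →
      (monomial (u + Finsupp.single j 1) (1 : k) : MvPolynomial (Fin (n + 1)) k) ∈ J →
      (monomial (u + Finsupp.single i 1) (1 : k) : MvPolynomial (Fin (n + 1)) k) ∈ J)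
    (g : Matrix.GeneralLinearGroup (Fin (n + 1)) k)
    -- `J` is the image of `I` under the coordinate change `x_j ↦ ∑ i, g i j • x i`:
    (hJ : J = Ideal.map
      (MvPolynomial.aeval (fun j : Fin (n + 1) =>
          ∑ i : Fin (n + 1),
            ((g : Matrix (Fin (n + 1)) (Fin (n + 1)) k) i j) •
              (X i : MvPolynomial (Fin (n + 1)) k)) :
        MvPolynomial (Fin (n + 1)) k →ₐ[k] MvPolynomial (Fin (n + 1)) k) I) :
    I = J := by
  have gI : Good I := ⟨hImon, hIst⟩
  have gJ : Good J := ⟨hJmon, hJst⟩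
  change J = Ideal.map (coordChange (g : Matrix (Fin (n + 1)) (Fin (n + 1)) k)) I at hJ
  apply le_antisymm
  · exact PP_all _ (Matrix.GeneralLinearGroup.det_ne_zero g) I J gI gJ hJ.ge
  · apply PP_all _ (Matrix.GeneralLinearGroup.det_ne_zero g⁻¹) J I gJ gI
    rw [hJ, ← map_coordChange_mul, ← Units.val_mul, inv_mul_cancel, Units.val_one, coordChange_one]
    exact (Ideal.map_id I).le

end
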